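/- The round-up cost C_↑ is 2-partition ordered minimizable: for every finite multiset Ω of reals and every partition of Ω into two nonempty multisets A, B there exist pairwise ordered multisets L, R with L + R = Ω, whose multiset of cardinalities {|L|,|R|} equals {|A|,|B|}, and with C_↑(L) + C_↑(R) ≤ C_↑(A) + C_↑(B). -/

import Mathlib

/-- Two multisets of reals are pairwise ordered iff every element of one is
less than or equal to every element of the other. -/
def PairwiseOrdered (A B : Multiset ℝ) : Prop :=
  (∀ a ∈ A, ∀ b ∈ B, a ≤ b) ∨ (∀ a ∈ A, ∀ b ∈ B, b ≤ a)

/-- Maximum of a (nonempty finite) multiset of reals. -/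
noncomputable def mmax (X : Multiset ℝ) : ℝ := sSup {y : ℝ | y ∈ X}

/-- Round-up cost: `C_↑(X) = Σ_{x∈X} (max(X) − x)`. -/
noncomputable def Cup (X : Multiset ℝ) : ℝ :=
  (X.map (fun x => mmax X - x)).sum

/-!
Order the parts so that `max A ≤ max B`, and let `L` consist of the `|A|` smallest elements of
`A + B` and `R` of the others. Among the elements of `A + B` at least `|A|` are `≤ max A`, so
`max L ≤ max A`, while `max R ≤ max (A + B) = max B`. Since `C_↑(X) = |X| max X - ∑ X` and the total
sum is preserved, the cost cannot increase.
-/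

section LinearOrder

variable {α : Type*} [LinearOrder α]

theorem exists_add_eq_card_eq_forall_le (Ω : Multiset α) {k : ℕ} (hk : k ≤ Ω.card) :
    ∃ L R : Multiset α, L + R = Ω ∧ L.card = k ∧ ∀ a ∈ L, ∀ b ∈ R, a ≤ b := by
  set l := Ω.sort (· ≤ ·)
  have hsorted : (l.take k ++ l.drop k).Pairwise (· ≤ ·) := by
    simpa only [List.take_append_drop] using Ω.pairwise_sort (· ≤ ·)
  refine ⟨l.take k, l.drop k, ?_, ?_, (List.pairwise_append.1 hsorted).2.2⟩
  · rw [Multiset.coe_add, List.take_append_drop, Multiset.sort_eq]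
  · simpa [l] using hk

theorem forall_mem_le_of_card_le_countP {L R : Multiset α} {m : α}
    (hord : ∀ a ∈ L, ∀ b ∈ R, a ≤ b) (hcard : L.card ≤ (L + R).countP (· ≤ m)) :
    ∀ a ∈ L, a ≤ m := by
  by_contra! ⟨a, haL, hma⟩
  have hR : R.countP (· ≤ m) = 0 :=
    Multiset.countP_eq_zero.2 fun b hb => (hma.trans_le (hord a haL b hb)).not_ge
  have hL : L.countP (· ≤ m) = L.card := by
    rw [Multiset.countP_add, hR, add_zero] at hcard
    exact (Multiset.countP_le_card _ L).antisymm hcard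
  exact hma.not_ge (Multiset.countP_eq_card.1 hL a haL)

end LinearOrder

theorem le_mmax {X : Multiset ℝ} {x : ℝ} (hx : x ∈ X) : x ≤ mmax X :=
  le_csSup X.finite_toSet.bddAbove hx

theorem mmax_le {X : Multiset ℝ} (hX : X ≠ 0) {m : ℝ} (h : ∀ x ∈ X, x ≤ m) : mmax X ≤ m :=
  csSup_le (Multiset.exists_mem_of_ne_zero hX) h

theorem cup_eq_card_mul_mmax_sub_sum (X : Multiset ℝ) : Cup X = X.card * mmax X - X.sum := by
  rw [Cup, Multiset.sum_map_sub, Multiset.map_const', Multiset.sum_replicate, nsmul_eq_mul,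
    Multiset.map_id']

theorem cup_add_cup_le_of_mmax_le {A B L R : Multiset ℝ} (hadd : L + R = A + B)
    (hcardL : L.card = A.card) (hcardR : R.card = B.card)
    (hmaxL : mmax L ≤ mmax A) (hmaxR : mmax R ≤ mmax B) :
    Cup L + Cup R ≤ Cup A + Cup B := by
  have hsum : L.sum + R.sum = A.sum + B.sum := by
    rw [← Multiset.sum_add, hadd, Multiset.sum_add]
  calc Cup L + Cup R
      = A.card * mmax L + B.card * mmax R - (L.sum + R.sum) := by
        simp only [cup_eq_card_mul_mmax_sub_sum, hcardL, hcardR]; ring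
    _ ≤ A.card * mmax A + B.card * mmax B - (A.sum + B.sum) := by
        rw [hsum]; gcongr
    _ = Cup A + Cup B := by
        simp only [cup_eq_card_mul_mmax_sub_sum]; ring

theorem mmax_le_mmax_of_card_le {A L R : Multiset ℝ} (hL : L ≠ 0) (hle : A ≤ L + R)
    (hord : ∀ a ∈ L, ∀ b ∈ R, a ≤ b) (hcard : L.card ≤ A.card) : mmax L ≤ mmax A := by
  refine mmax_le hL (forall_mem_le_of_card_le_countP hord ?_)
  calc L.card ≤ A.card := hcard
    _ = A.countP (· ≤ mmax A) := (Multiset.countP_eq_card.2 fun _ => le_mmax).symm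
    _ ≤ (L + R).countP (· ≤ mmax A) := Multiset.countP_le_of_le _ hle

theorem mmax_le_mmax_of_le_add {A B X : Multiset ℝ} (hX : X ≠ 0) (hle : X ≤ A + B)
    (hmax : mmax A ≤ mmax B) : mmax X ≤ mmax B := by
  refine mmax_le hX fun x hx => ?_
  rcases Multiset.mem_add.1 (Multiset.mem_of_le hle hx) with hxA | hxB
  · exact (le_mmax hxA).trans hmax
  · exact le_mmax hxB

theorem cup_add_cup_le_of_forall_le {A B L R : Multiset ℝ} (hA : A ≠ 0) (hB : B ≠ 0)
    (hmax : mmax A ≤ mmax B) (hadd : L + R = A + B) (hord : ∀ a ∈ L, ∀ b ∈ R, a ≤ b)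
    (hcardL : L.card = A.card) (hcardR : R.card = B.card) :
    Cup L + Cup R ≤ Cup A + Cup B := by
  have hL : L ≠ 0 := by rwa [← Multiset.card_pos, hcardL, Multiset.card_pos]
  have hR : R ≠ 0 := by rwa [← Multiset.card_pos, hcardR, Multiset.card_pos]
  exact cup_add_cup_le_of_mmax_le hadd hcardL hcardR
    (mmax_le_mmax_of_card_le hL (hadd ▸ Multiset.le_add_right A B) hord hcardL.le)
    (mmax_le_mmax_of_le_add hR (hadd ▸ Multiset.le_add_left R L) hmax)

/-- The round-up cost is 2-partition ordered minimizable. -/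
theorem roundup_two_partition_ordered_minimizable
    (Ω A B : Multiset ℝ) (hpart : A + B = Ω) (hA : A ≠ 0) (hB : B ≠ 0) :
    ∃ L R : Multiset ℝ, L + R = Ω ∧ PairwiseOrdered L R ∧
      ({Multiset.card L, Multiset.card R} : Multiset ℕ) =
        {Multiset.card A, Multiset.card B} ∧
      Cup L + Cup R ≤ Cup A + Cup B := by
  wlog hmax : mmax A ≤ mmax B generalizing A B
  · rw [Multiset.pair_comm A.card, add_comm (Cup A)]
    exact this B A (by rwa [add_comm]) hB hA (le_of_not_ge hmax)
  have hcardΩ : A.card + B.card = Ω.card := by rw [← hpart, Multiset.card_add]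
  obtain ⟨L, R, hadd, hcardL, hord⟩ :=
    exists_add_eq_card_eq_forall_le Ω (Nat.le.intro hcardΩ)
  have hcardR : R.card = B.card := by
    rw [← hadd, Multiset.card_add, hcardL] at hcardΩ
    exact (Nat.add_left_cancel hcardΩ).symm
  exact ⟨L, R, hadd, Or.inl hord, by rw [hcardL, hcardR],
    cup_add_cup_le_of_forall_le hA hB hmax (hadd.trans hpart.symm) hord hcardL hcardR⟩
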